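/- Let f : T → T be a continuous map of a tree and let A be a subcontinuum of T containing a periodic point of f. Then A is asymptotically periodic under f, i.e., there exists p ≥ 1 such that the sequence (f^{pn}(A))_{n≥0} converges in the hyperspace of subcontinua of T with the Hausdorff metric. -/

import Mathlib

open Set Filter Metric Topology TopologicalSpace

/-- An arc: a subset homeomorphic to `[0,1]`. -/
def IsArc {T : Type*} [TopologicalSpace T] (A : Set T) : Prop :=
  Nonempty (↥(Set.Icc (0:ℝ) 1) ≃ₜ ↥A)

/-- An arc with endpoints `x` and `y`. -/
def IsArcBetween {T : Type*} [TopologicalSpace T] (A : Set T) (x y : T) : Prop :=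
  ∃ e : ↥(Set.Icc (0:ℝ) 1) ≃ₜ ↥A,
    ((e ⟨0, by norm_num⟩ : ↥A) : T) = x ∧ ((e ⟨1, by norm_num⟩ : ↥A) : T) = y

/-- A tree: a continuum which is uniquely arcwise connected and is a point or a
union of finitely many arcs. -/
structure IsTreeSpace (T : Type*) [MetricSpace T] : Prop where
  compact : CompactSpace T
  conn : ConnectedSpace T
  uniqueArc : ∀ x y : T, x ≠ y → ∃! A : Set T, IsArcBetween A x y
  finiteArcs : (∃ x : T, (Set.univ : Set T) = {x}) ∨
    ∃ s : Finset (Set T), (∀ A ∈ s, IsArc A) ∧ ⋃₀ (s : Set (Set T)) = Set.univ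

/-- The unique arc from `x` to `y` in a tree. -/
noncomputable def treeArc {T : Type*} [MetricSpace T] (hT : IsTreeSpace T) (x y : T) :
    Set T := by
  classical exact if h : x = y then {x} else (hT.uniqueArc x y h).choose

/-- `Comp B x` : the connected component of `x` in `B` if `x ∈ B`, else `{x}`. -/
noncomputable def Comp {T : Type*} [TopologicalSpace T] (B : Set T) (x : T) : Set T := by
  classical exact if x ∈ B then connectedComponentIn B x else {x}

/-- `x` is an endpoint of the whole space (valence one). -/
def IsEnd {T : Type*} [TopologicalSpace T] (x : T) : Prop :=
  IsConnected ({x}ᶜ : Set T)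

/-- `x` is a cut-point of the whole space (valence at least two). -/
def IsCut {T : Type*} [TopologicalSpace T] (x : T) : Prop :=
  ¬ IsPreconnected ({x}ᶜ : Set T)

/-- `x` is an endpoint of the subspace `S` (valence one in `S`). -/
def IsEndpointOf {T : Type*} [TopologicalSpace T] (S : Set T) (x : T) : Prop :=
  x ∈ S ∧ IsConnected (S \ {x})

/-- A subcontinuum: a nonempty compact connected subset. -/
def IsSubcontinuum {T : Type*} [TopologicalSpace T] (A : Set T) : Prop :=
  A.Nonempty ∧ IsCompact A ∧ IsConnected A

/-- Attracting fixed point. -/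
def IsAFP {T : Type*} [TopologicalSpace T] (f : T → T) (x : T) : Prop :=
  f x = x ∧ ∀ U : Set T, IsOpen U → x ∈ U →
    ∃ V : Set T, IsOpen V ∧ x ∈ V ∧ V ⊆ U ∧ f '' closure V ⊆ V

/-- `A` is asymptotically periodic under `f`: for some `p ≥ 1` the sequence
`f^{pn}(A)` converges in the Hausdorff metric (to a nonempty compact set). -/
def AsympPeriodic {T : Type*} [MetricSpace T] (f : T → T) (A : Set T) : Prop :=
  ∃ p : ℕ, 1 ≤ p ∧ ∃ L : Set T, L.Nonempty ∧ IsCompact L ∧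
    Tendsto (fun n : ℕ => hausdorffDist (f^[p * n] '' A) L) atTop (𝓝 0)

/-- Kuratowski lower limit of a sequence of sets. -/
def KLiminf {T : Type*} [TopologicalSpace T] (A : ℕ → Set T) : Set T :=
  {x | ∀ U : Set T, IsOpen U → x ∈ U → ∀ᶠ n in atTop, (U ∩ A n).Nonempty}

/-- Kuratowski upper limit of a sequence of sets. -/
def KLimsup {T : Type*} [TopologicalSpace T] (A : ℕ → Set T) : Set T :=
  {x | ∀ U : Set T, IsOpen U → x ∈ U → ∃ᶠ n in atTop, (U ∩ A n).Nonempty}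

/-- Convergence in the hyperspace: the Kuratowski lower and upper limits agree. -/
def KConv {T : Type*} [TopologicalSpace T] (A : ℕ → Set T) : Prop :=
  KLiminf A = KLimsup A

/-- Set-theoretic limit superior of the iterated images of `A`. -/
def Ls {T : Type*} (f : T → T) (A : Set T) : Set T :=
  ⋂ m : ℕ, ⋃ n : ℕ, ⋃ (_ : m ≤ n), f^[n] '' A

/-- The hyperspace of subcontinua of `T`, with the Hausdorff metric. -/
abbrev SubCon (T : Type*) [MetricSpace T] :=
  {A : NonemptyCompacts T // IsConnected (A.1 : Set T)}

/-- The induced map on the hyperspace of subcontinua. -/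
noncomputable def indCon {T : Type*} [MetricSpace T] (f : T → T) (hf : Continuous f) :
    SubCon T → SubCon T :=
  fun A => ⟨⟨⟨f '' (A.1 : Set T), A.1.isCompact.image hf⟩, A.1.nonempty.image f⟩,
    A.2.image f hf.continuousOn⟩

/-- Topological entropy (Bowen–Dinaburg) of `f` on the subset `S`. -/
noncomputable def entropyOn {X : Type*} [MetricSpace X] (f : X → X) (S : Set X) : EReal :=
  Dynamics.coverEntropy f S

/-- Topological entropy of `f`. -/
noncomputable def entropy {X : Type*} [MetricSpace X] (f : X → X) : EReal :=
  Dynamics.coverEntropy f Set.univ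

/-- Maximal cardinality of an `(n,f,ε)`-separated subset of `S`. -/
noncomputable def sepNumOn {X : Type*} [MetricSpace X] (f : X → X) (S : Set X)
    (n : ℕ) (ε : ℝ) : ℕ :=
  sSup {k : ℕ | ∃ E : Finset X, ↑E ⊆ S ∧
    (∀ x ∈ E, ∀ y ∈ E, x ≠ y → ∃ j < n, ε < dist (f^[j] x) (f^[j] y)) ∧ E.card = k}

/-- Minimal cardinality of an `(n,f,ε)`-spanning subset of `S`. -/
noncomputable def spanNumOn {X : Type*} [MetricSpace X] (f : X → X) (S : Set X)
    (n : ℕ) (ε : ℝ) : ℕ :=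
  sInf {k : ℕ | ∃ F : Finset X, ↑F ⊆ S ∧
    (∀ x ∈ S, ∃ y ∈ F, ∀ j < n, dist (f^[j] x) (f^[j] y) ≤ ε) ∧ F.card = k}

noncomputable def sepNum {X : Type*} [MetricSpace X] (f : X → X) (n : ℕ) (ε : ℝ) : ℕ :=
  sepNumOn f Set.univ n ε

noncomputable def spanNum {X : Type*} [MetricSpace X] (f : X → X) (n : ℕ) (ε : ℝ) : ℕ :=
  spanNumOn f Set.univ n ε

/-- The graph of a map. -/
def graphOf {X : Type*} (φ : X → X) : Set (X × X) := {p | p.2 = φ p.1}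

/-- The functional envelope: the closure, in the hyperspace of nonempty compact
subsets of `X × X` with the Hausdorff metric, of the set of graphs of continuous
self-maps of `X`. -/
def FunctionalEnvelope (X : Type*) [MetricSpace X] :
    Set (NonemptyCompacts (X × X)) :=
  closure {G : NonemptyCompacts (X × X) | ∃ φ : X → X, Continuous φ ∧
    (G : Set (X × X)) = graphOf φ}

/-- `F` is the map induced by `f` on the functional envelope:
`F(φ) = f ∘ φ`, i.e. on graphs, `F(G) = (id × f)(G)`. -/
def IsEnvelopeMap {X : Type*} [MetricSpace X] (f : X → X)
    (F : ↥(FunctionalEnvelope X) → ↥(FunctionalEnvelope X)) : Prop :=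
  ∀ G : ↥(FunctionalEnvelope X),
    ((F G : NonemptyCompacts (X × X)) : Set (X × X)) =
      Prod.map id f '' ((G : NonemptyCompacts (X × X)) : Set (X × X))

/-- The setoid on `T` identifying all points of `M` (so that `Quotient` is `T/M`). -/
def collapseSetoid {T : Type*} (M : Set T) : Setoid T where
  r a b := a = b ∨ (a ∈ M ∧ b ∈ M)
  iseqv := by
    refine ⟨fun a => Or.inl rfl, ?_, ?_⟩
    · rintro a b (rfl | ⟨h1, h2⟩)
      exacts [Or.inl rfl, Or.inr ⟨h2, h1⟩]
    · rintro a b c (rfl | ⟨h1, h2⟩) h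
      · exact h
      · rcases h with rfl | ⟨h3, h4⟩
        exacts [Or.inr ⟨h1, h2⟩, Or.inr ⟨h1, h4⟩]

/-!
Let `x ∈ A` be fixed by `g = f^[p]`. In the cut-point preorder rooted at `x`, where `y ≤ z` if every
connected set containing `x` and `z` contains `y`, connected sets containing `x` are lower sets, and
`g` maps lower sets to lower sets because the image of the arc from `x` to `a` is connected. Since
the tree is a finite union of arcs, it is a union of finitely many, say `N`, chains.

Hence among any `N + 1` points of a `g`-orbit two are comparable, `w` and `g^[d] w` with `d ≤ N`.
If `w ≤ g^[d] w`, these `d` steps can be repeated any number of times: some orbit starting in `A`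
has the same end and is longer by a given multiple of `d`. If `g^[d] w ≤ w`, they can be left out.
In a long orbit this occurs in many disjoint windows, and since every `d ≤ N` divides `N !`, we
conclude that a point of `g^[N ! * (n + 1)] '' A`, with `n` large, lies in `g^[N ! * n] '' A` or
in all the later `g^[N ! * k] '' A`. A sequence of sets with this property has equal Kuratowski
limits, which in a compact metric space is convergence in the Hausdorff metric.
-/

open Function
open scoped Nat

section KuratowskiLimits

variable {T : Type*} {S : ℕ → Set T}

theorem isClosed_kLimsup [TopologicalSpace T] (S : ℕ → Set T) : IsClosed (KLimsup S) := by
  refine isClosed_of_closure_subset fun x hx U hU hxU => ?_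
  obtain ⟨y, hyU, hy⟩ := mem_closure_iff.mp hx U hU hxU
  exact hy U hU hyU

/-- If a set meeting `S n` frequently contains a point that stays in `S k` from some time on, it
meets `S k` eventually; otherwise one can descend from arbitrarily late times to all times. -/
theorem kConv_of_descend_or_persist [TopologicalSpace T] {m : ℕ}
    (h : ∀ n ≥ m, ∀ z ∈ S (n + 1), z ∈ S n ∨ ∀ k > n, z ∈ S k) : KConv S := by
  refine Subset.antisymm (fun x hx U hU hxU => (hx U hU hxU).frequently) fun x hx U hU hxU => ?_
  by_cases hpersist : ∃ n, ∃ z ∈ U, ∀ k > n, z ∈ S k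
  · obtain ⟨n, z, hzU, hz⟩ := hpersist
    filter_upwards [eventually_gt_atTop n] with k hk using ⟨z, hzU, hz k hk⟩
  · have hdescend : ∀ n ≥ m, (U ∩ S (n + 1)).Nonempty → (U ∩ S n).Nonempty :=
      fun n hn ⟨z, hzU, hz⟩ =>
        ⟨z, hzU, (h n hn z hz).resolve_right fun hk => hpersist ⟨n, z, hzU, hk⟩⟩
    filter_upwards [eventually_ge_atTop m] with n hn
    obtain ⟨k, hk, hUk⟩ := frequently_atTop.mp (hx U hU hxU) n
    exact Nat.decreasingInduction' (P := fun i => (U ∩ S i).Nonempty)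
      (fun i _ hi => hdescend i (hn.trans hi)) hk hUk

variable [PseudoMetricSpace T] [CompactSpace T]

theorem eventually_forall_mem_exists_kLimsup_dist_le (S : ℕ → Set T) {ε : ℝ} (hε : 0 < ε) :
    ∀ᶠ n in atTop, ∀ x ∈ S n, ∃ y ∈ KLimsup S, dist x y ≤ ε := by
  have hfar : ∀ᶠ n in atTop, Disjoint (S n) (thickening ε (KLimsup S))ᶜ := by
    refine isOpen_thickening.isClosed_compl.isCompact.induction_on
      (p := fun K => ∀ᶠ n in atTop, Disjoint (S n) K) (by simp)
      (fun _ _ hst ht => ht.mono fun _ hn => hn.mono_right hst)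
      (fun _ _ hs ht => hs.mp (ht.mono fun _ hnt hns => hns.union_right hnt)) fun x hx => ?_
    have hxL : x ∉ KLimsup S := fun hxL => hx (self_subset_thickening hε _ hxL)
    simp only [KLimsup, mem_ofPred_eq, not_forall, not_frequently,
      not_nonempty_iff_eq_empty] at hxL
    obtain ⟨U, hU, hxU, hmiss⟩ := hxL
    exact ⟨U, mem_nhdsWithin_of_mem_nhds (hU.mem_nhds hxU),
      hmiss.mono fun n hn => (disjoint_iff_inter_eq_empty.mpr hn).symm⟩
  filter_upwards [hfar] with n hn x hx
  obtain ⟨y, hy, hxy⟩ := mem_thickening_iff.mp (disjoint_compl_right_iff_subset.mp hn hx)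
  exact ⟨y, hy, hxy.le⟩

theorem KConv.eventually_forall_kLimsup_exists_dist_le (h : KConv S) {ε : ℝ} (hε : 0 < ε) :
    ∀ᶠ n in atTop, ∀ x ∈ KLimsup S, ∃ y ∈ S n, dist x y ≤ ε := by
  refine (isClosed_kLimsup S).isCompact.induction_on
    (p := fun K => ∀ᶠ n in atTop, ∀ x ∈ K, ∃ y ∈ S n, dist x y ≤ ε) (by simp)
    (fun _ _ hst ht => ht.mono fun _ hn x hx => hn x (hst hx))
    (fun _ _ hs ht => hs.mp (ht.mono fun _ hnt hns x hx => hx.elim (hns x) (hnt x)))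
    fun x hx => ?_
  rw [← h] at hx
  refine ⟨ball x (ε / 2), mem_nhdsWithin_of_mem_nhds (ball_mem_nhds x (half_pos hε)), ?_⟩
  filter_upwards [hx _ isOpen_ball (mem_ball_self (half_pos hε))] with n ⟨y, hyx, hy⟩ z hz
  refine ⟨y, hy, (dist_triangle_right z y x).trans ?_⟩
  linarith [mem_ball.mp hz, mem_ball.mp hyx]

theorem KConv.tendsto_hausdorffDist (h : KConv S) :
    Tendsto (fun n => hausdorffDist (S n) (KLimsup S)) atTop (𝓝 0) := by
  rw [Metric.tendsto_nhds]
  intro ε hε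
  filter_upwards [eventually_forall_mem_exists_kLimsup_dist_le S (half_pos hε),
    h.eventually_forall_kLimsup_exists_dist_le (half_pos hε)] with n hSL hLS
  rw [Real.dist_0_eq_abs, abs_of_nonneg hausdorffDist_nonneg]
  exact (hausdorffDist_le_of_mem_dist (half_pos hε).le hSL hLS).trans_lt (half_lt_self hε)

end KuratowskiLimits

section LowerSets

variable {α : Type*} [LE α] {f : α → α} {s : Set α}

/-- The map `f` sends lower sets to lower sets. For the cut-point preorder of a
tree rooted at a fixed point of `f`, this is how continuity of `f` enters the proof. -/
def PreservesLowerSets (f : α → α) : Prop :=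
  ∀ ⦃s : Set α⦄, IsLowerSet s → IsLowerSet (f '' s)

namespace PreservesLowerSets

theorem iterate (hf : PreservesLowerSets f) (n : ℕ) : PreservesLowerSets f^[n] := by
  induction n with
  | zero => exact fun s hs => by simpa using hs
  | succ n ih => exact fun s hs => by simpa only [iterate_succ, image_comp] using ih (hf hs)

theorem iterate_mem_image_iterate_add_mul (hf : PreservesLowerSets f) (hs : IsLowerSet s)
    {a : α} (ha : a ∈ s) {i d n : ℕ} (hin : i ≤ n) (hle : f^[i] a ≤ f^[i + d] a) (l : ℕ) :
    f^[n] a ∈ f^[n + d * l] '' s := by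
  have hpump : f^[i] a ∈ f^[d * l] '' (f^[i] '' s) := by
    induction l with
    | zero => simpa using mem_image_of_mem f^[i] ha
    | succ l ih =>
      rw [Nat.mul_succ, Nat.add_comm, iterate_add, image_comp]
      refine hf.iterate d (hf.iterate (d * l) (hf.iterate i hs)) ?_ (mem_image_of_mem _ ih)
      rwa [← iterate_add_apply, Nat.add_comm]
  obtain ⟨k, rfl⟩ := Nat.exists_eq_add_of_le' hin
  rw [iterate_add_apply, Nat.add_assoc, Nat.add_comm i, iterate_add, iterate_add, image_comp,
    image_comp]
  exact mem_image_of_mem _ hpump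

theorem iterate_mem_image_iterate_sub (hf : PreservesLowerSets f) (hs : IsLowerSet s)
    {a : α} (ha : a ∈ s) {i d n : ℕ} (hid : i + d ≤ n) (hle : f^[i + d] a ≤ f^[i] a) :
    f^[n] a ∈ f^[n - d] '' s := by
  obtain ⟨b, hb, hba⟩ := hf.iterate i hs hle (mem_image_of_mem _ ha)
  refine ⟨b, hb, ?_⟩
  rw [show n - d = (n - (i + d)) + i by lia, iterate_add_apply, hba, ← iterate_add_apply,
    Nat.sub_add_cancel hid]

theorem exists_iterate_mul_mem_image_iterate (hf : PreservesLowerSets f) (hs : IsLowerSet s)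
    {a : α} (ha : a ∈ s) {L M : ℕ} {d : ℕ → ℕ}
    (hd : ∀ t < M, ∃ i, i + d t ≤ L ∧ f^[i + d t] (f^[L * t] a) ≤ f^[i] (f^[L * t] a)) :
    ∃ k, k + ∑ t ∈ Finset.range M, d t = L * M ∧ f^[L * M] a ∈ f^[k] '' s := by
  induction M with
  | zero => exact ⟨0, by simpa using ha⟩
  | succ M ih =>
    obtain ⟨k, hk, hmem⟩ := ih fun t ht => hd t (ht.trans M.lt_succ_self)
    obtain ⟨i, hi, hle⟩ := hd M M.lt_succ_self
    refine ⟨L - d M + k, ?_, ?_⟩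
    · rw [Finset.sum_range_succ, Nat.mul_succ]
      lia
    · rw [Nat.mul_succ, Nat.add_comm (L * M), iterate_add_apply, iterate_add, image_comp]
      exact hf.iterate_mem_image_iterate_sub (hf.iterate k hs) hmem hi hle

end PreservesLowerSets

theorem exists_comparable_of_chain_coloring {N : ℕ} {c : α → Fin N}
    (hc : ∀ x y, c x = c y → x ≤ y ∨ y ≤ x) (v : ℕ → α) :
    ∃ i d, 0 < d ∧ i + d ≤ N ∧ (v i ≤ v (i + d) ∨ v (i + d) ≤ v i) := by
  obtain ⟨j, k, hjk, hcol⟩ := Fintype.exists_ne_map_eq_of_card_lt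
    (fun i : Fin (N + 1) => c (v i)) (by simp)
  wlog hlt : j < k generalizing j k
  · exact this k j hjk.symm hcol.symm (lt_of_le_of_ne (not_lt.mp hlt) hjk.symm)
  refine ⟨j, k - j, by lia, by lia, ?_⟩
  rw [Nat.add_sub_of_le (by lia)]
  exact hc _ _ hcol

theorem exists_subset_range_sum_eq_factorial {N : ℕ} (hN : 0 < N) {d : ℕ → ℕ}
    (hd : ∀ t < N * N !, 0 < d t ∧ d t ≤ N) :
    ∃ S ⊆ Finset.range (N * N !), ∑ t ∈ S, d t = N ! := by
  have hmaps : ∀ t ∈ Finset.range (N * N !), d t ∈ Finset.Icc 1 N := fun t ht =>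
    Finset.mem_Icc.mpr (hd t (Finset.mem_range.mp ht))
  obtain ⟨r, hr, hcard⟩ := Finset.exists_le_card_fiber_of_mul_le_card_of_maps_to hmaps
    (Finset.nonempty_Icc.mpr hN) (n := N !) (by simp)
  obtain ⟨hr, hrN⟩ := Finset.mem_Icc.mp hr
  obtain ⟨S, hS, hScard⟩ := Finset.exists_subset_card_eq ((Nat.div_le_self (N !) r).trans hcard)
  refine ⟨S, hS.trans (Finset.filter_subset _ _), ?_⟩
  calc ∑ t ∈ S, d t = ∑ _t ∈ S, r := Finset.sum_congr rfl fun t ht =>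
        (Finset.mem_filter.mp (hS ht)).2
    _ = N ! := by
      rw [Finset.sum_const, hScard, smul_eq_mul, Nat.div_mul_cancel (Nat.dvd_factorial hr hrN)]

namespace PreservesLowerSets

/-- Cut the orbit of `a` into windows of length `N`. By pigeonhole each window contains
two comparable points `w` and `f^[d] w`. If `w ≤ f^[d] w` for one window, the orbit can be
prolonged by repeating these `d` steps; otherwise they can be deleted from any set of windows, and
for a suitable set exactly `N !` steps disappear. -/
theorem iterate_mem_image_iterate_sub_or_add (hf : PreservesLowerSets f)
    (hs : IsLowerSet s) {N : ℕ} {c : α → Fin N} (hc : ∀ x y, c x = c y → x ≤ y ∨ y ≤ x)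
    {a : α} (ha : a ∈ s) :
    f^[N * (N * N !)] a ∈ f^[N * (N * N !) - N !] '' s ∨
      ∀ l, f^[N * (N * N !)] a ∈ f^[N * (N * N !) + N ! * l] '' s := by
  choose i d hd hidN hcomp using fun t =>
    exists_comparable_of_chain_coloring hc fun i => f^[i] (f^[N * t] a)
  by_cases hup : ∃ t < N * N !, f^[i t] (f^[N * t] a) ≤ f^[i t + d t] (f^[N * t] a)
  · right
    intro l
    obtain ⟨t, ht, hle⟩ := hup
    have hle' : f^[i t + N * t] a ≤ f^[i t + N * t + d t] a := by
      rwa [Nat.add_right_comm, iterate_add_apply, iterate_add_apply]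
    have hlt : i t + N * t ≤ N * (N * N !) := by
      nlinarith [hidN t, Nat.mul_le_mul_left N ht]
    obtain ⟨q, hq⟩ := Nat.dvd_factorial (hd t) (le_of_add_le_right (hidN t))
    rw [show N ! * l = d t * (q * l) by rw [hq, Nat.mul_assoc]]
    exact hf.iterate_mem_image_iterate_add_mul hs ha hlt hle' (q * l)
  · left
    push Not at hup
    obtain ⟨S, hS, hsum⟩ := exists_subset_range_sum_eq_factorial (c a).pos
      fun t _ => ⟨hd t, le_of_add_le_right (hidN t)⟩
    obtain ⟨k, hk, hmem⟩ := hf.exists_iterate_mul_mem_image_iterate hs ha (L := N) (M := N * N !)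
      (d := fun t => if t ∈ S then d t else 0) fun t ht => by
        refine ⟨i t, ?_, ?_⟩ <;> split_ifs
        · exact hidN t
        · exact le_of_add_le_left (hidN t)
        · exact (hcomp t).resolve_left (hup t ht)
        · exact or_self_iff.mp (hc _ _ rfl)
    rw [Finset.sum_ite_mem, Finset.inter_eq_right.mpr hS, hsum] at hk
    rwa [← hk, Nat.add_sub_cancel, hk]

theorem mem_image_iterate_sub_or_add (hf : PreservesLowerSets f) (hs : IsLowerSet s)
    {N : ℕ} {c : α → Fin N} (hc : ∀ x y, c x = c y → x ≤ y ∨ y ≤ x)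
    {n : ℕ} (hn : N * (N * N !) ≤ n) {z : α} (hz : z ∈ f^[n] '' s) :
    z ∈ f^[n - N !] '' s ∨ ∀ l, z ∈ f^[n + N ! * l] '' s := by
  obtain ⟨a, ha, rfl⟩ := hz
  obtain ⟨k, rfl⟩ := Nat.exists_eq_add_of_le hn
  have hfac : N ! ≤ N * (N * N !) := by
    rw [← Nat.mul_assoc]
    exact Nat.le_mul_of_pos_left _ (Nat.mul_pos (c a).pos (c a).pos)
  have := hf.iterate_mem_image_iterate_sub_or_add (hf.iterate k hs) hc (mem_image_of_mem _ ha)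
  simp only [← image_comp, ← iterate_add, ← iterate_add_apply] at this
  convert this using 5 <;> lia

theorem kConv_image_iterate [TopologicalSpace α] (hf : PreservesLowerSets f) (hs : IsLowerSet s)
    {N : ℕ} {c : α → Fin N} (hc : ∀ x y, c x = c y → x ≤ y ∨ y ≤ x) :
    KConv fun n => f^[N ! * n] '' s := by
  refine kConv_of_descend_or_persist (m := N * (N * N !)) fun n hn z hz => ?_
  rw [Nat.mul_succ] at hz
  have hlarge : N * (N * N !) ≤ N ! * n + N ! :=
    hn.le.trans ((Nat.le_mul_of_pos_left n N.factorial_pos).trans (Nat.le_add_right _ _))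
  refine (hf.mem_image_iterate_sub_or_add hs hc hlarge hz).imp (fun h => ?_) fun h k hk => ?_
  · simpa using h
  · convert h (k - (n + 1)) using 3
    rw [← Nat.mul_succ, ← Nat.mul_add, Nat.add_sub_of_le hk]

end PreservesLowerSets

end LowerSets

section SimplePaths

variable {T : Type*} {g h : ℝ → T} {a b s t : ℝ} {F : Set T} {x y z : T}

theorem eqOn_ite_le_right (hgh : g s = h s) :
    EqOn (fun r => if r ≤ s then g r else h r) h (Ici s) := fun r hr => by
  rcases (mem_Ici.mp hr).eq_or_lt with rfl | hlt
  · simp [hgh]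
  · exact if_neg hlt.not_ge

variable [TopologicalSpace T]

/-- The restriction of `g` to `[a, b]` is a continuous injective path. The interval may be
degenerate, so that constant paths are included. -/
structure IsSimplePath (g : ℝ → T) (a b : ℝ) : Prop where
  le : a ≤ b
  continuousOn : ContinuousOn g (Icc a b)
  injOn : InjOn g (Icc a b)

namespace IsSimplePath

theorem mono (hg : IsSimplePath g a b) (hs : a ≤ s) (hst : s ≤ t) (ht : t ≤ b) :
    IsSimplePath g s t :=
  ⟨hst, hg.continuousOn.mono (Icc_subset_Icc hs ht), hg.injOn.mono (Icc_subset_Icc hs ht)⟩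

theorem comp_neg (hg : IsSimplePath g a b) : IsSimplePath (fun r => g (-r)) (-b) (-a) := by
  have hmaps : MapsTo (fun r : ℝ => -r) (Icc (-b) (-a)) (Icc a b) := fun r hr =>
    ⟨le_neg_of_le_neg hr.2, neg_le_of_neg_le hr.1⟩
  exact ⟨neg_le_neg hg.le, hg.continuousOn.comp continuous_neg.continuousOn hmaps,
    hg.injOn.comp neg_injective.injOn hmaps⟩

theorem comp_sub_const (hg : IsSimplePath g a b) (c : ℝ) :
    IsSimplePath (fun r => g (r - c)) (a + c) (b + c) := by
  have hmaps : MapsTo (fun r : ℝ => r - c) (Icc (a + c) (b + c)) (Icc a b) := fun r hr =>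
    ⟨le_sub_iff_add_le.mpr hr.1, sub_le_iff_le_add.mpr hr.2⟩
  exact ⟨by simpa using hg.le, hg.continuousOn.comp (by fun_prop) hmaps,
    hg.injOn.comp (sub_left_injective).injOn hmaps⟩

theorem append (hg : IsSimplePath g a s) (hh : IsSimplePath h s b) (hgh : g s = h s)
    (hmeet : ∀ r ∈ Icc a s, ∀ t ∈ Icc s b, g r = h t → r = s) :
    IsSimplePath (fun r => if r ≤ s then g r else h r) a b := by
  have hleft : EqOn (fun r => if r ≤ s then g r else h r) g (Icc a s) := fun r hr => if_pos hr.2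
  have hright : EqOn (fun r => if r ≤ s then g r else h r) h (Icc s b) :=
    (eqOn_ite_le_right hgh).mono Icc_subset_Ici_self
  refine ⟨hg.le.trans hh.le, ?_, ?_⟩
  · rw [← Icc_union_Icc_eq_Icc hg.le hh.le]
    exact (hg.continuousOn.congr hleft).union_of_isClosed (hh.continuousOn.congr hright)
      isClosed_Icc isClosed_Icc
  · have hdisj : Disjoint (Icc a s) (Ioc s b) :=
      disjoint_left.mpr fun _ hr ht => ht.1.not_ge hr.2
    rw [← Icc_union_Ioc_eq_Icc hg.le hh.le, injOn_union hdisj]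
    refine ⟨hg.injOn.congr hleft.symm, (hh.injOn.congr hright.symm).mono Ioc_subset_Icc_self,
      fun r hr t ht heq => ?_⟩
    have ht' : t ∈ Icc s b := Ioc_subset_Icc_self ht
    replace heq : g r = h t := (hleft hr).symm.trans (heq.trans (hright ht'))
    obtain rfl := hmeet r hr t ht' heq
    exact ht.1.ne (hh.injOn (left_mem_Icc.mpr hh.le) ht' (hgh.symm.trans heq))

theorem isArcBetween [T2Space T] (hg : IsSimplePath g a b) (hab : g a ≠ g b) :
    IsArcBetween (g '' Icc a b) (g a) (g b) := by
  have hlt : a < b := hg.le.lt_of_ne fun h => hab (h ▸ rfl)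
  have hcont : Continuous (hg.injOn.bijOn_image.equiv g) :=
    hg.continuousOn.domRestrict.subtype_mk _
  refine ⟨(iccHomeoI a b hlt).symm.trans hcont.homeoOfEquivCompactToT2, ?_, ?_⟩
  · exact congrArg g ((iccHomeoI_symm_apply_coe a b hlt _).trans (by simp))
  · exact congrArg g ((iccHomeoI_symm_apply_coe a b hlt _).trans (by simp))

theorem exists_first_mem (hg : IsSimplePath g a b) (hF : IsClosed F) (hb : g b ∈ F) :
    ∃ s ∈ Icc a b, g s ∈ F ∧ ∀ r ∈ Icc a s, g r ∈ F → r = s := by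
  have hcompact : IsCompact (Icc a b ∩ g ⁻¹' F) := isCompact_Icc.of_isClosed_subset
    (hg.continuousOn.preimage_isClosed_of_isClosed isClosed_Icc hF) inter_subset_left
  obtain ⟨s, ⟨hs, hsF⟩, hmin⟩ := hcompact.exists_isLeast ⟨b, right_mem_Icc.mpr hg.le, hb⟩
  exact ⟨s, hs, hsF, fun r hr hrF => hr.2.antisymm (hmin ⟨⟨hr.1, hr.2.trans hs.2⟩, hrF⟩)⟩

end IsSimplePath

/-- The points `x` and `y` coincide or are the ends of an arc contained in `F`, where in both cases
`x` and `y` lie in `F`. This is the analogue of `JoinedIn` for injective paths. -/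
def ArcJoinedIn (F : Set T) (x y : T) : Prop :=
  ∃ (g : ℝ → T) (a b : ℝ), IsSimplePath g a b ∧ g a = x ∧ g b = y ∧ MapsTo g (Icc a b) F

namespace ArcJoinedIn

theorem refl (hx : x ∈ F) : ArcJoinedIn F x x :=
  ⟨fun _ => x, 0, 0, ⟨le_rfl, continuousOn_const, by simp⟩, rfl, rfl, fun _ _ => hx⟩

theorem symm (h : ArcJoinedIn F x y) : ArcJoinedIn F y x := by
  obtain ⟨g, a, b, hg, rfl, rfl, hF⟩ := h
  exact ⟨_, -b, -a, hg.comp_neg, by simp, by simp,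
    fun r hr => hF ⟨le_neg_of_le_neg hr.2, neg_le_of_neg_le hr.1⟩⟩

/-- The first path is left for the second one as soon as it meets it. -/
theorem trans [T2Space T] (hxy : ArcJoinedIn F x y) (hyz : ArcJoinedIn F y z) :
    ArcJoinedIn F x z := by
  obtain ⟨g, a, b, hg, rfl, rfl, hgF⟩ := hxy
  obtain ⟨h, c, d, hh, hhb, rfl, hhF⟩ := hyz
  obtain ⟨s, hs, ⟨t, ht, hts⟩, hfirst⟩ := hg.exists_first_mem
    (isCompact_Icc.image_of_continuousOn hh.continuousOn).isClosed ⟨c, left_mem_Icc.mpr hh.le, hhb⟩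
  have hh' := (hh.mono ht.1 ht.2 le_rfl).comp_sub_const (s - t)
  rw [add_sub_cancel] at hh'
  have hglue : g s = h (s - (s - t)) := by rw [sub_sub_cancel, hts]
  have hmem : ∀ r ∈ Icc s (d + (s - t)), r - (s - t) ∈ Icc c d := fun r hr =>
    ⟨by linarith [hr.1, ht.1], by linarith [hr.2]⟩
  refine ⟨_, a, d + (s - t), (hg.mono le_rfl hs.1 hs.2).append hh' hglue
    fun r hr u hu heq => hfirst r hr (heq ▸ mem_image_of_mem h (hmem u hu)), if_pos hs.1, ?_,
    fun r hr => ?_⟩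
  · exact (eqOn_ite_le_right (h := fun r => h (r - (s - t))) hglue hh'.le).trans (by simp)
  · dsimp only
    split_ifs with hrs
    · exact hgF ⟨hr.1, hrs.trans hs.2⟩
    · exact hhF (hmem r ⟨le_of_not_ge hrs, hr.2⟩)

end ArcJoinedIn

theorem IsSimplePath.arcJoinedIn (hg : IsSimplePath g a b) (hs : s ∈ Icc a b) (ht : t ∈ Icc a b)
    (hF : MapsTo g (uIcc s t) F) : ArcJoinedIn F (g s) (g t) := by
  wlog hst : s ≤ t generalizing s t
  · exact (this ht hs (uIcc_comm s t ▸ hF) (le_of_not_ge hst)).symm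
  exact ⟨g, s, t, hg.mono hs.1 hst ht.2, rfl, rfl, uIcc_of_le hst ▸ hF⟩

theorem continuous_homeomorph_projIcc {A : Set T} (e : Icc (0 : ℝ) 1 ≃ₜ A) :
    Continuous fun r => (e (projIcc 0 1 zero_le_one r) : T) :=
  continuous_subtype_val.comp (e.continuous.comp continuous_projIcc)

theorem isSimplePath_homeomorph_projIcc {A : Set T} (e : Icc (0 : ℝ) 1 ≃ₜ A) :
    IsSimplePath (fun r => (e (projIcc 0 1 zero_le_one r) : T)) 0 1 where
  le := zero_le_one
  continuousOn := (continuous_homeomorph_projIcc e).continuousOn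
  injOn := fun _ hr _ ht heq => (strictMonoOn_projIcc _).injOn hr ht (e.injective (Subtype.ext heq))

theorem IsArc.eventually_arcJoinedIn {A : Set T} (hA : IsArc A) (hF : IsOpen F) (hxA : x ∈ A)
    (hxF : x ∈ F) : ∀ᶠ y in 𝓝[A] x, ArcJoinedIn F x y := by
  obtain ⟨e⟩ := hA
  have hparam : ∀ y : A, ((e (projIcc 0 1 zero_le_one (e.symm y)) : A) : T) = y := by simp
  lift x to A using hxA
  have hopen : ∀ᶠ r in 𝓝 (e.symm x : ℝ), (e (projIcc 0 1 zero_le_one r) : T) ∈ F :=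
    (continuous_homeomorph_projIcc e).continuousAt.eventually_mem
      (hF.mem_nhds (by rwa [hparam]))
  have hcont : Tendsto (fun y : A => (e.symm y : ℝ)) (𝓝 x) (𝓝 (e.symm x)) :=
    (continuous_subtype_val.comp e.symm.continuous).continuousAt
  rw [← map_nhds_subtype_val, eventually_map]
  filter_upwards [(tendsto_const_nhds.uIcc hcont).eventually
    (eventually_smallSets_forall.mpr hopen)] with y hy
  simpa only [hparam] using (isSimplePath_homeomorph_projIcc e).arcJoinedIn
    (e.symm x).2 (e.symm y).2 (F := F) hy

theorem eventually_arcJoinedIn_of_sUnion_eq_univ [T2Space T] {s : Finset (Set T)}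
    (hs : ∀ A ∈ s, IsArc A) (hcov : ⋃₀ (s : Set (Set T)) = univ) (hF : IsOpen F) (hx : x ∈ F) :
    ∀ᶠ y in 𝓝 x, ArcJoinedIn F x y := by
  rw [← nhdsWithin_univ, ← hcov, nhdsWithin_sUnion s.finite_toSet]
  simp only [eventually_iSup]
  intro A hA
  by_cases hxA : x ∈ A
  · exact (hs A hA).eventually_arcJoinedIn hF hxA hx
  · obtain ⟨e⟩ := hs A hA
    have hclosed : IsClosed A := (isCompact_iff_compactSpace.mpr e.compactSpace).isClosed
    rw [notMem_closure_iff_nhdsWithin_eq_bot.mp (hclosed.closure_eq.symm ▸ hxA)]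
    exact eventually_bot

end SimplePaths

section CutPoints

variable {T : Type*} [TopologicalSpace T]

/-- The cut-point preorder rooted at `x`: `y ≤ z` if every connected set containing `x` and `z`
also contains `y`. In a tree this says that `y` lies on the arc from `x` to `z`. -/
abbrev cutPointPreorder (x : T) : Preorder T where
  le y z := ∀ B, IsPreconnected B → x ∈ B → z ∈ B → y ∈ B
  le_refl _ _ _ _ hz := hz
  le_trans _ _ _ hyz hzw B hB hx hw := hyz B hB hx (hzw B hB hx hw)

theorem isLowerSet_cutPointPreorder_of_isPreconnected {x : T} {B : Set T}
    (hB : IsPreconnected B) (hx : x ∈ B) :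
    letI := cutPointPreorder x
    IsLowerSet B :=
  fun _ _ hyz hz => hyz B hB hx hz

theorem isPreconnected_image_iterate {f : T → T}
    (hf : ∀ B, IsPreconnected B → IsPreconnected (f '' B)) (n : ℕ) :
    ∀ B, IsPreconnected B → IsPreconnected (f^[n] '' B) := by
  induction n with
  | zero => simp
  | succ n ih => exact fun B hB => by simpa only [iterate_succ, image_comp] using ih _ (hf B hB)

end CutPoints

section Trees

variable {T : Type*} [MetricSpace T] {x y z : T} {B : Set T}

theorem IsTreeSpace.eventually_arcJoinedIn (hT : IsTreeSpace T) {F : Set T} (hF : IsOpen F)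
    (hx : x ∈ F) : ∀ᶠ y in 𝓝 x, ArcJoinedIn F x y := by
  obtain ⟨o, ho⟩ | ⟨s, hs, hcov⟩ := hT.finiteArcs
  · have hsub : Subsingleton T := subsingleton_univ_iff.mp (ho ▸ subsingleton_singleton)
    exact Eventually.of_forall fun y => hsub.elim x y ▸ ArcJoinedIn.refl hx
  · exact eventually_arcJoinedIn_of_sUnion_eq_univ hs hcov hF hx

theorem IsTreeSpace.arcJoinedIn_of_isPreconnected (hT : IsTreeSpace T) {F : Set T} (hF : IsOpen F)
    (hB : IsPreconnected B) (hBF : B ⊆ F) (hx : x ∈ B) (hy : y ∈ B) : ArcJoinedIn F x y := by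
  refine hB.induction₂ (ArcJoinedIn F) (fun z hz => ?_) (fun _ _ _ _ _ _ => ArcJoinedIn.trans)
    (fun _ _ _ _ => ArcJoinedIn.symm) hx hy
  exact nhdsWithin_le_nhds (hT.eventually_arcJoinedIn hF (hBF hz))

/-- If a preconnected set containing both ends missed a point `p` of the arc, the ends could also
be joined by an arc in the complement of `p`. -/
theorem IsTreeSpace.image_subset_of_isPreconnected (hT : IsTreeSpace T) {g : ℝ → T} {a b : ℝ}
    (hg : IsSimplePath g a b) (hB : IsPreconnected B) (ha : g a ∈ B) (hb : g b ∈ B) :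
    g '' Icc a b ⊆ B := by
  rintro _ ⟨r, hr, rfl⟩
  by_contra hrB
  obtain ⟨h, c, d, hh, hhc, hhd, hmaps⟩ := hT.arcJoinedIn_of_isPreconnected
    isOpen_compl_singleton hB (subset_compl_singleton_iff.mpr hrB) ha hb
  have hab : g a ≠ g b := fun heq => by
    obtain rfl := hg.injOn (left_mem_Icc.mpr hg.le) (right_mem_Icc.mpr hg.le) heq
    exact hrB (le_antisymm hr.1 hr.2 ▸ ha)
  have harc : IsArcBetween (h '' Icc c d) (g a) (g b) := by
    rw [← hhc, ← hhd] at hab ⊢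
    exact hh.isArcBetween hab
  have himage := (hT.uniqueArc _ _ hab).unique (hg.isArcBetween hab) harc
  obtain ⟨t, ht, htr⟩ := himage ▸ mem_image_of_mem g hr
  exact hmaps ht htr

theorem IsTreeSpace.exists_isSimplePath (hT : IsTreeSpace T) (x y : T) :
    ∃ (g : ℝ → T) (a b : ℝ), IsSimplePath g a b ∧ g a = x ∧ g b = y := by
  have := hT.conn
  obtain ⟨g, a, b, hg, ha, hb, -⟩ :=
    hT.arcJoinedIn_of_isPreconnected isOpen_univ isPreconnected_univ subset_rfl
      (mem_univ x) (mem_univ y)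
  exact ⟨g, a, b, hg, ha, hb⟩

theorem IsTreeSpace.exists_ends_of_isArc (hT : IsTreeSpace T) {A : Set T} (hA : IsArc A) :
    ∃ u v : T, ∀ B, IsPreconnected B → u ∈ B → v ∈ B → A ⊆ B := by
  obtain ⟨e⟩ := hA
  refine ⟨_, _, fun B hB hu hv y hy => hT.image_subset_of_isPreconnected
    (isSimplePath_homeomorph_projIcc e) hB hu hv ⟨_, (e.symm ⟨y, hy⟩).2, by simp⟩⟩

theorem IsTreeSpace.exists_finset_mem_of_isPreconnected (hT : IsTreeSpace T) :
    ∃ E : Finset T, ∀ y, ∃ u ∈ E, ∃ v ∈ E, ∀ B, IsPreconnected B → u ∈ B → v ∈ B → y ∈ B := by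
  classical
  obtain ⟨o, ho⟩ | ⟨s, hs, hcov⟩ := hT.finiteArcs
  · exact ⟨{o}, fun y => ⟨o, by simp, o, by simp, fun B _ hoB _ =>
      (ho ▸ mem_univ y : y ∈ ({o} : Set T)) ▸ hoB⟩⟩
  · choose u v huv using fun A : s => hT.exists_ends_of_isArc (hs A A.2)
    refine ⟨Finset.univ.image u ∪ Finset.univ.image v, fun y => ?_⟩
    obtain ⟨A, hA, hyA⟩ := (hcov ▸ mem_univ y : y ∈ ⋃₀ (s : Set (Set T)))
    exact ⟨u ⟨A, hA⟩, by simp, v ⟨A, hA⟩, by simp, fun B hB hu hv => huv ⟨A, hA⟩ B hB hu hv hyA⟩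

theorem IsTreeSpace.le_or_le_of_le (hT : IsTreeSpace T) {e : T} :
    letI := cutPointPreorder x
    y ≤ e → z ≤ e → y ≤ z ∨ z ≤ y := by
  intro hy hz
  obtain ⟨g, a, b, hg, rfl, rfl⟩ := hT.exists_isSimplePath x e
  have hpre : IsPreconnected (g '' Icc a b) := isPreconnected_Icc.image g hg.continuousOn
  have ha := mem_image_of_mem g (left_mem_Icc.mpr hg.le)
  have hb := mem_image_of_mem g (right_mem_Icc.mpr hg.le)
  obtain ⟨s, hs, rfl⟩ := hy _ hpre ha hb
  obtain ⟨t, ht, rfl⟩ := hz _ hpre ha hb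
  have hmono : ∀ {s t}, s ∈ Icc a b → t ∈ Icc a b → s ≤ t →
      @LE.le T (cutPointPreorder (g a)).toLE (g s) (g t) := fun hs ht hst B hB haB htB =>
    hT.image_subset_of_isPreconnected (hg.mono le_rfl ht.1 ht.2) hB haB htB
      (mem_image_of_mem g ⟨hs.1, hst⟩)
  exact (le_total s t).imp (hmono hs ht) (hmono ht hs)

theorem IsTreeSpace.exists_finset_forall_exists_le (hT : IsTreeSpace T) (x : T) :
    letI := cutPointPreorder x
    ∃ E : Finset T, ∀ y : T, ∃ e ∈ E, y ≤ e := by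
  obtain ⟨E, hE⟩ := hT.exists_finset_mem_of_isPreconnected
  refine ⟨E, fun y => ?_⟩
  obtain ⟨u, hu, v, hv, huv⟩ := hE y
  by_contra! h
  obtain ⟨B, hB, hxB, huB, hyB⟩ : ∃ B, IsPreconnected B ∧ x ∈ B ∧ u ∈ B ∧ y ∉ B := by
    simpa [LE.le] using h u hu
  obtain ⟨C, hC, hxC, hvC, hyC⟩ : ∃ B, IsPreconnected B ∧ x ∈ B ∧ v ∈ B ∧ y ∉ B := by
    simpa [LE.le] using h v hv
  exact (huv _ (hB.union x hxB hxC hC) (Or.inl huB) (Or.inr hvC)).elim hyB hyC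

theorem IsTreeSpace.exists_chain_coloring (hT : IsTreeSpace T) (x : T) :
    letI := cutPointPreorder x
    ∃ (N : ℕ) (c : T → Fin N), ∀ y z : T, c y = c z → y ≤ z ∨ z ≤ y := by
  obtain ⟨E, hE⟩ := hT.exists_finset_forall_exists_le x
  choose e heE hle using hE
  refine ⟨_, fun y => E.equivFin ⟨e y, heE y⟩, fun y z hyz => ?_⟩
  have heq : e y = e z := congrArg Subtype.val (E.equivFin.injective hyz)
  exact hT.le_or_le_of_le (hle y) (heq ▸ hle z)

theorem IsTreeSpace.preservesLowerSets (hT : IsTreeSpace T) {f : T → T}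
    (hf : ∀ B, IsPreconnected B → IsPreconnected (f '' B)) (hx : f x = x) :
    letI := cutPointPreorder x
    PreservesLowerSets f := by
  rintro s hs _ b hb ⟨a, ha, rfl⟩
  obtain ⟨g, c, d, hg, rfl, rfl⟩ := hT.exists_isSimplePath x a
  have hc := mem_image_of_mem g (left_mem_Icc.mpr hg.le)
  have hd := mem_image_of_mem g (right_mem_Icc.mpr hg.le)
  obtain ⟨w, hw, rfl⟩ := hb _ (hf _ (isPreconnected_Icc.image g hg.continuousOn))
    (hx ▸ mem_image_of_mem f hc) (mem_image_of_mem f hd)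
  exact ⟨w, hs (fun B hB hcB hdB => hT.image_subset_of_isPreconnected hg hB hcB hdB hw) ha, rfl⟩

end Trees

theorem asympPeriodic_of_periodic_point_general {T : Type*} [MetricSpace T]
    (hT : IsTreeSpace T) {f : T → T} (hf : ∀ B, IsPreconnected B → IsPreconnected (f '' B))
    {A : Set T} (hA : IsPreconnected A) (hper : ∃ x ∈ A, ∃ p : ℕ, 1 ≤ p ∧ f^[p] x = x) :
    AsympPeriodic f A := by
  obtain ⟨x, hxA, p, hp, hx⟩ := hper
  have := hT.compact
  let := cutPointPreorder x
  obtain ⟨N, c, hc⟩ := hT.exists_chain_coloring x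
  have hlower : PreservesLowerSets f^[p] :=
    hT.preservesLowerSets (isPreconnected_image_iterate hf p) hx
  have hconv : KConv fun n => f^[p * N ! * n] '' A := by
    simpa only [← iterate_mul, ← Nat.mul_assoc] using hlower.kConv_image_iterate
      (isLowerSet_cutPointPreorder_of_isPreconnected hA hxA) hc
  have hxL : x ∈ KLimsup fun n => f^[p * N ! * n] '' A := fun U _ hxU =>
    Frequently.of_forall fun n => ⟨x, hxU, x, hxA, by
      rw [Nat.mul_assoc, iterate_mul]
      exact iterate_fixed hx _⟩
  exact ⟨p * N !, Nat.mul_pos hp N.factorial_pos, _, ⟨x, hxL⟩, (isClosed_kLimsup _).isCompact,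
    hconv.tendsto_hausdorffDist⟩

/-- a subcontinuum containing a periodic point is asymptotically
periodic. -/
theorem asympPeriodic_of_periodic_point {T : Type*} [MetricSpace T]
    (hT : IsTreeSpace T) (f : T → T) (hf : Continuous f)
    (A : Set T) (hA : IsSubcontinuum A)
    (hper : ∃ x ∈ A, ∃ p : ℕ, 1 ≤ p ∧ f^[p] x = x) :
    AsympPeriodic f A :=
  asympPeriodic_of_periodic_point_general hT (fun _ hB => hB.image f hf.continuousOn)
    hA.2.2.isPreconnected hper
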